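/- A 2-edge-connected unbalanced signed graph is flow-admissible if and only if it is not tightly unbalanced. -/

import Mathlib

open Finset

/-- A signed multigraph on vertex type `V` with edge type `E`: each edge `e`
consists of two half-edges indexed by `Bool`; `ends e i` is the end-vertex at
which the half-edge `(e, i)` is attached (loops and multiple edges are
allowed), and `sign e ∈ {1, -1}` is the sign of the edge `e`. -/
structure SignedGraph (V E : Type) where
  ends : E → Bool → V
  sign : E → ℤˣ

namespace SignedGraph

variable {V E : Type} [Fintype V] [Fintype E] [DecidableEq V] [DecidableEq E]

/-- The valency of `v` in the subgraph spanned by the edge set `S`: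
the number of half-edges of edges of `S` attached at `v` (a loop at `v`
contributes `2`). -/
def valencyOn (G : SignedGraph V E) (S : Finset E) (v : V) : ℕ :=
  (univ.filter fun p : E × Bool => p.1 ∈ S ∧ G.ends p.1 p.2 = v).card

/-- The valency of a vertex in `G`. -/
def valency (G : SignedGraph V E) (v : V) : ℕ :=
  G.valencyOn univ v

/-- The set of vertices incident with some edge of `S`. -/
def suppV (G : SignedGraph V E) (S : Finset E) : Finset V :=
  univ.filter fun v => ∃ e ∈ S, ∃ i : Bool, G.ends e i = v

/-- `u` and `v` are joined by an edge of `S`. -/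
def AdjOn (G : SignedGraph V E) (S : Finset E) (u v : V) : Prop :=
  ∃ e ∈ S, ∃ i : Bool, G.ends e i = u ∧ G.ends e (!i) = v

/-- The subgraph spanned by the edge set `S` is connected: any two vertices
incident with edges of `S` are joined by a walk using edges of `S`. -/
def ConnOn (G : SignedGraph V E) (S : Finset E) : Prop :=
  ∀ u ∈ G.suppV S, ∀ v ∈ G.suppV S, Relation.ReflTransGen (G.AdjOn S) u v

/-- `G` is connected (as a graph on the whole vertex set `V`). -/
def Connected (G : SignedGraph V E) : Prop :=
  Nonempty V ∧ ∀ u v : V, Relation.ReflTransGen (G.AdjOn univ) u v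

/-- The edge set `S` spans a circuit: a nonempty connected `2`-regular
subgraph. -/
def IsCircuit (G : SignedGraph V E) (S : Finset E) : Prop :=
  S.Nonempty ∧ G.ConnOn S ∧ ∀ v ∈ G.suppV S, G.valencyOn S v = 2

/-- The sign of a set of edges: the product of the signs of its edges. -/
def signOf (G : SignedGraph V E) (S : Finset E) : ℤˣ :=
  ∏ e ∈ S, G.sign e

/-- The negative edges among `S`. -/
def negEdges (G : SignedGraph V E) (S : Finset E) : Finset E :=
  S.filter fun e => G.sign e = -1

/-- A balanced circuit: a circuit of sign `+1`. -/
def IsBalancedCircuit (G : SignedGraph V E) (S : Finset E) : Prop :=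
  G.IsCircuit S ∧ G.signOf S = 1

/-- An unbalanced circuit: a circuit of sign `-1`. -/
def IsUnbalancedCircuit (G : SignedGraph V E) (S : Finset E) : Prop :=
  G.IsCircuit S ∧ G.signOf S = -1

/-- `G` is balanced: it contains no unbalanced circuit. -/
def Balanced (G : SignedGraph V E) : Prop :=
  ∀ S : Finset E, G.IsCircuit S → G.signOf S = 1

/-- `G` is tightly unbalanced: it is unbalanced, but for some edge `f` the
graph `G - f` is balanced. -/
def TightlyUnbalanced (G : SignedGraph V E) : Prop :=
  ¬ G.Balanced ∧ ∃ f : E, ∀ S : Finset E, G.IsCircuit S → f ∉ S → G.signOf S = 1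

/-- `G` is eulerian: connected with all valencies even. -/
def Eulerian (G : SignedGraph V E) : Prop :=
  G.Connected ∧ ∀ v : V, Even (G.valency v)

/-- The edge set `S` spans an eulerian subgraph of `G`. -/
def EulerianOn (G : SignedGraph V E) (S : Finset E) : Prop :=
  S.Nonempty ∧ G.ConnOn S ∧ ∀ v : V, Even (G.valencyOn S v)

/-- An orientation (bidirection) of `G`: `dir e i = true` means that the
half-edge `(e, i)` is directed towards its end-vertex, `dir e i = false` that
it is directed away from it.  Compatibility: a positive edge becomes an
ordinary directed edge (one half-edge in, one out) and a negative edge becomes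
a broken (extroverted or introverted) edge. -/
structure Orientation (G : SignedGraph V E) where
  dir : E → Bool → Bool
  compat : ∀ e : E, G.sign e = 1 ↔ dir e false ≠ dir e true

/-- `φ` is a flow on `G` with respect to the orientation `O`: at every vertex
`v`, the sum of values on half-edges directed into `v` equals the sum of
values on half-edges directed out of `v` (Kirchhoff's law). -/
def IsFlow {A : Type} [AddCommGroup A] (G : SignedGraph V E)
    (O : G.Orientation) (φ : E → A) : Prop :=
  ∀ v : V,
    ∑ p ∈ univ.filter (fun p : E × Bool => G.ends p.1 p.2 = v),
      (if O.dir p.1 p.2 then φ p.1 else -φ p.1) = 0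

/-- `G` admits a nowhere-zero `A`-flow. -/
def HasNZFlow (G : SignedGraph V E) (A : Type) [AddCommGroup A] : Prop :=
  ∃ (O : G.Orientation) (φ : E → A), G.IsFlow O φ ∧ ∀ e : E, φ e ≠ 0

/-- `G` is flow-admissible: it admits a nowhere-zero integer flow. -/
def FlowAdmissible (G : SignedGraph V E) : Prop :=
  ∃ (O : G.Orientation) (φ : E → ℤ), G.IsFlow O φ ∧ ∀ e : E, φ e ≠ 0

/-- `G` admits a nowhere-zero `k`-flow: an integer flow with all values in
`{±1, …, ±(k-1)}`. -/
def HasNZkFlow (G : SignedGraph V E) (k : ℕ) : Prop :=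
  ∃ (O : G.Orientation) (φ : E → ℤ), G.IsFlow O φ ∧
    ∀ e : E, φ e ≠ 0 ∧ |φ e| < (k : ℤ)

/-- `G` is triply odd: it can be decomposed into three edge-disjoint eulerian
subgraphs, each with an odd number of negative edges, sharing a common
vertex. -/
def TriplyOdd (G : SignedGraph V E) : Prop :=
  ∃ S₁ S₂ S₃ : Finset E,
    Disjoint S₁ S₂ ∧ Disjoint S₁ S₃ ∧ Disjoint S₂ S₃ ∧
    S₁ ∪ S₂ ∪ S₃ = univ ∧
    G.EulerianOn S₁ ∧ G.EulerianOn S₂ ∧ G.EulerianOn S₃ ∧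
    Odd (G.negEdges S₁).card ∧ Odd (G.negEdges S₂).card ∧
    Odd (G.negEdges S₃).card ∧
    ∃ v : V, v ∈ G.suppV S₁ ∧ v ∈ G.suppV S₂ ∧ v ∈ G.suppV S₃

/-- The edge set `P` spans a (nontrivial) path from `u` to `v`: a connected
subgraph in which `u` and `v` have valency `1` and all other vertices have
valency `2`. -/
def IsPathOn (G : SignedGraph V E) (P : Finset E) (u v : V) : Prop :=
  u ≠ v ∧ G.ConnOn P ∧ u ∈ G.suppV P ∧ v ∈ G.suppV P ∧
  G.valencyOn P u = 1 ∧ G.valencyOn P v = 1 ∧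
  ∀ w ∈ G.suppV P, w ≠ u → w ≠ v → G.valencyOn P w = 2

/-- `T` spans a signed circuit of type (2): the union of two unbalanced
circuits meeting at a single vertex. -/
def IsType2 (G : SignedGraph V E) (T : Finset E) : Prop :=
  ∃ (S₁ S₂ : Finset E) (v : V),
    G.IsUnbalancedCircuit S₁ ∧ G.IsUnbalancedCircuit S₂ ∧ Disjoint S₁ S₂ ∧
    G.suppV S₁ ∩ G.suppV S₂ = {v} ∧ S₁ ∪ S₂ = T

/-- `T` spans a signed circuit of type (3): the union of two vertex-disjoint
unbalanced circuits together with a path meeting the circuits only at its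
ends. -/
def IsType3 (G : SignedGraph V E) (T : Finset E) : Prop :=
  ∃ (S₁ S₂ P : Finset E) (u v : V),
    G.IsUnbalancedCircuit S₁ ∧ G.IsUnbalancedCircuit S₂ ∧
    Disjoint (G.suppV S₁) (G.suppV S₂) ∧
    G.IsPathOn P u v ∧ u ∈ G.suppV S₁ ∧ v ∈ G.suppV S₂ ∧
    G.suppV P ∩ G.suppV S₁ = {u} ∧ G.suppV P ∩ G.suppV S₂ = {v} ∧
    Disjoint P (S₁ ∪ S₂) ∧ S₁ ∪ S₂ ∪ P = T

/-- `T` spans a signed circuit: a balanced circuit, or a signed circuit of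
type (2) or (3). -/
def IsSignedCircuit (G : SignedGraph V E) (T : Finset E) : Prop :=
  G.IsBalancedCircuit T ∨ G.IsType2 T ∨ G.IsType3 T

/-- `T` spans a weak unbalanced bicircuit: two edge-disjoint unbalanced
circuits (not necessarily vertex-disjoint) joined by a possibly trivial path
having no edge in the two circuits. -/
def IsWeakBicircuit (G : SignedGraph V E) (T : Finset E) : Prop :=
  ∃ C₁ C₂ : Finset E,
    G.IsUnbalancedCircuit C₁ ∧ G.IsUnbalancedCircuit C₂ ∧ Disjoint C₁ C₂ ∧
    (((∃ v : V, v ∈ G.suppV C₁ ∧ v ∈ G.suppV C₂) ∧ T = C₁ ∪ C₂) ∨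
      ∃ (P : Finset E) (u v : V),
        G.IsPathOn P u v ∧ u ∈ G.suppV C₁ ∧ v ∈ G.suppV C₂ ∧
        Disjoint P (C₁ ∪ C₂) ∧ T = C₁ ∪ C₂ ∪ P)

/-- Every connected component of `G - f` contains an unbalanced circuit,
i.e. `G - f` has no balanced component. -/
def NoBalancedComponentAvoiding (G : SignedGraph V E) (f : E) : Prop :=
  ∀ u : V, ∃ S : Finset E,
    G.IsCircuit S ∧ G.signOf S = -1 ∧ f ∉ S ∧
    ∀ w ∈ G.suppV S, Relation.ReflTransGen (G.AdjOn (univ.erase f)) w u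

/-- `G` is 2-edge-connected: connected, and still connected after removing
any single edge. -/
def TwoEdgeConnected (G : SignedGraph V E) : Prop :=
  G.Connected ∧ ∀ f : E, ∀ u v : V,
    Relation.ReflTransGen (G.AdjOn (univ.erase f)) u v

/-- `G` is antibalanced: replacing its signature `σ` by `-σ` makes it
balanced. -/
def Antibalanced (G : SignedGraph V E) : Prop :=
  ∀ S : Finset E, G.IsCircuit S → (∏ e ∈ S, (-G.sign e)) = 1

end SignedGraph

/-!
Switching at a vertex set `A` negates the edges of the cut `δ(A)`, and an edge is frustrated by `A`
if it is negative after the switching. By Harary's theorem a signed graph is balanced iff some `A`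
frustrates no edge: a minimal edge set `S` violating this has, for every `e ∈ S`, a vertex set
frustrating `e` alone, so inside `S` no single edge is a cut while any two edges form one, and this
forces `S` to be a circuit, of sign `-1`.

By linear duality over `ℚ`, a nowhere-zero flow exists iff there is no edge `f` and no potential
`y : V → ℚ` satisfying `y v = σ(e) y u` on every edge `e = uv` other than `f`, but not on `f`. If
`G - f` is connected, then `|y|` is constant along such a potential, so `y` amounts to the vertex
set `{y < 0}`, which frustrates `f` and no other edge.
-/

namespace SignedGraph

open scoped symmDiff

variable {V E : Type}

/-! ### Cuts and switching -/

section Cut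

variable [Fintype E] [DecidableEq V]

/-- The edge cut `δ(A)`: the edges with exactly one end in the vertex set `A`. Loops never belong
to it. -/
def cut (G : SignedGraph V E) (A : Finset V) : Finset E :=
  {e | ¬ (G.ends e false ∈ A ↔ G.ends e true ∈ A)}

/-- The edges of `S` that are negative in the signed graph obtained from `G` by switching at the
vertex set `A`, that is, by reversing the signs of the edges of `G.cut A`. -/
def frustrated [DecidableEq E] (G : SignedGraph V E) (A : Finset V) (S : Finset E) : Finset E :=
  {e ∈ S | ¬ (G.sign e = -1 ↔ e ∈ G.cut A)}

/-- The edges of `S` can be made positive simultaneously by switching: the condition equivalent to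
balance in Harary's theorem. -/
def Switchable [DecidableEq E] (G : SignedGraph V E) (S : Finset E) : Prop :=
  ∃ A : Finset V, G.frustrated A S = ∅

variable {G : SignedGraph V E} {A B : Finset V} {S : Finset E} {e : E}

theorem mem_cut_iff (i : Bool) : e ∈ G.cut A ↔ ¬ (G.ends e i ∈ A ↔ G.ends e (!i) ∈ A) := by
  cases i <;> simp [cut, iff_comm]

theorem cut_compl [Fintype V] (G : SignedGraph V E) (A : Finset V) : G.cut Aᶜ = G.cut A := by
  simp [cut, not_iff_not]

theorem mem_iff_mem_of_reflTransGen (hcut : ∀ e ∈ S, e ∉ G.cut A) {u v : V}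
    (huv : Relation.ReflTransGen (G.AdjOn S) u v) : u ∈ A ↔ v ∈ A := by
  induction huv with
  | refl => rfl
  | tail _ hadj ih =>
    obtain ⟨e, he, i, rfl, rfl⟩ := hadj
    exact ih.trans (by simpa only [mem_cut_iff i, not_not] using hcut e he)

variable [DecidableEq E]

theorem TwoEdgeConnected.cut_eq_empty_of_subset_singleton (h : G.TwoEdgeConnected) {f : E}
    (hcut : G.cut A ⊆ {f}) : G.cut A = ∅ := by
  have hoff : ∀ e ∈ univ.erase f, e ∉ G.cut A := fun e he hmem =>
    ne_of_mem_erase he (mem_singleton.mp (hcut hmem))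
  refine eq_empty_of_forall_notMem fun e he => (mem_cut_iff false).mp he ?_
  exact mem_iff_mem_of_reflTransGen hoff (h.2 f _ _)

theorem cut_symmDiff : G.cut (A ∆ B) = G.cut A ∆ G.cut B := by
  ext e
  simp only [cut, mem_symmDiff, mem_filter_univ]
  tauto

theorem frustrated_erase : G.frustrated A (S.erase e) = (G.frustrated A S).erase e :=
  filter_erase _ _ _

theorem frustrated_symmDiff_frustrated :
    G.frustrated A S ∆ G.frustrated B S = S ∩ G.cut (A ∆ B) := by
  ext e
  rw [cut_symmDiff]
  simp only [frustrated, mem_symmDiff, mem_filter, mem_inter]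
  tauto

theorem exists_frustrated_eq_singleton_of_minimal
    (hmin : Minimal (fun T => ¬ G.Switchable T) S) (he : e ∈ S) :
    ∃ A, G.frustrated A S = {e} := by
  obtain ⟨A, hA⟩ : G.Switchable (S.erase e) :=
    not_not.mp (hmin.not_prop_of_lt (erase_ssubset he))
  rw [frustrated_erase, erase_eq_empty_iff] at hA
  exact ⟨A, hA.resolve_left fun h => hmin.prop ⟨A, h⟩⟩

theorem inter_cut_ne_singleton_of_minimal (hmin : Minimal (fun T => ¬ G.Switchable T) S)
    (B : Finset V) (e : E) : S ∩ G.cut B ≠ {e} := by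
  intro hB
  have he : e ∈ S := (mem_inter.mp (hB ▸ mem_singleton_self e)).1
  obtain ⟨A, hA⟩ := exists_frustrated_eq_singleton_of_minimal hmin he
  have h : G.frustrated A S ∆ G.frustrated (A ∆ B) S = {e} := by
    rw [frustrated_symmDiff_frustrated, symmDiff_symmDiff_cancel_left, hB]
  exact hmin.prop ⟨A ∆ B, symmDiff_eq_left.mp (hA ▸ h)⟩

theorem exists_inter_cut_eq_pair_of_minimal (hmin : Minimal (fun T => ¬ G.Switchable T) S)
    {f : E} (he : e ∈ S) (hf : f ∈ S) (hef : e ≠ f) : ∃ A, S ∩ G.cut A = {e, f} := by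
  obtain ⟨A, hA⟩ := exists_frustrated_eq_singleton_of_minimal hmin he
  obtain ⟨B, hB⟩ := exists_frustrated_eq_singleton_of_minimal hmin hf
  refine ⟨A ∆ B, ?_⟩
  rw [← frustrated_symmDiff_frustrated, hA, hB,
    (disjoint_singleton.mpr hef).symmDiff_eq_sup, sup_eq_union, singleton_union]

end Cut

/-! ### Signs of even edge sets -/

section Sign

variable {G : SignedGraph V E} {S : Finset E}

theorem mem_suppV [Fintype V] [DecidableEq V] {v : V} :
    v ∈ G.suppV S ↔ ∃ e ∈ S, ∃ i, G.ends e i = v := by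
  simp [suppV]

variable [Fintype E] [DecidableEq V] [DecidableEq E]

theorem IsCircuit.even_valencyOn [Fintype V] (hS : G.IsCircuit S) (v : V) :
    Even (G.valencyOn S v) := by
  by_cases hv : v ∈ G.suppV S
  · rw [hS.2.2 v hv]
    exact even_two
  · have hzero : G.valencyOn S v = 0 := by
      refine card_eq_zero.mpr (filter_eq_empty_iff.mpr fun p _ hp => hv ?_)
      exact mem_suppV.mpr ⟨p.1, hp.1, p.2, hp.2⟩
    simp [hzero]

theorem prod_prod_ends [Fintype V] {M : Type*} [CommMonoid M] (G : SignedGraph V E) (S : Finset E)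
    (s : V → M) : ∏ e ∈ S, ∏ i, s (G.ends e i) = ∏ v, s v ^ G.valencyOn S v := by
  have hfiber (v : V) : G.valencyOn S v = #{p ∈ S ×ˢ univ | G.ends p.1 p.2 = v} := by
    refine congrArg card (ext fun p => ?_)
    simp
  rw [← prod_product', ← prod_fiberwise _ fun p : E × Bool => G.ends p.1 p.2]
  refine prod_congr rfl fun v _ => ?_
  rw [hfiber, ← prod_const]
  exact prod_congr rfl fun p hp => by rw [(mem_filter.mp hp).2]

theorem signOf_eq_neg_one_pow_card_frustrated [Finite V]
    (hS : ∀ v, Even (G.valencyOn S v)) (A : Finset V) :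
    G.signOf S = (-1) ^ #(G.frustrated A S) := by
  cases nonempty_fintype V
  let s : V → ℤˣ := fun v => if v ∈ A then -1 else 1
  have hswitch : ∏ e ∈ S, ∏ i, s (G.ends e i) = 1 := by
    rw [prod_prod_ends]
    refine prod_eq_one fun v _ => ?_
    obtain ⟨k, hk⟩ := hS v
    rw [hk, pow_add, Int.units_mul_self]
  have hsign (e : E) : G.sign e =
      (∏ i, s (G.ends e i)) * if ¬ (G.sign e = -1 ↔ e ∈ G.cut A) then -1 else 1 := by
    rcases Int.units_eq_one_or (G.sign e) with h | h <;>
      by_cases h₀ : G.ends e false ∈ A <;> by_cases h₁ : G.ends e true ∈ A <;>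
      simp [s, cut, h, h₀, h₁]
  rw [signOf, prod_congr rfl fun e _ => hsign e, prod_mul_distrib, hswitch, one_mul, prod_ite,
    prod_const, prod_const_one, mul_one, frustrated]

end Sign

/-! ### Recognising circuits by their cuts -/

section Circuit

variable [Fintype E] [DecidableEq V] [DecidableEq E] {G : SignedGraph V E} {S : Finset E}

theorem eq_of_mem_of_loop (hpair : ∀ e ∈ S, ∀ f ∈ S, e ≠ f → ∃ A, S ∩ G.cut A = {e, f})
    {e f : E} (he : e ∈ S) (hloop : G.ends e false = G.ends e true) (hf : f ∈ S) : f = e := by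
  by_contra hne
  obtain ⟨A, hA⟩ := hpair e he f hf (Ne.symm hne)
  have hmem : e ∈ G.cut A := (mem_inter.mp (hA ▸ mem_insert_self e {f})).2
  exact (mem_cut_iff false).mp hmem (by simp [hloop])

theorem connOn_of_inter_cut [Fintype V] (hsingle : ∀ A e, S ∩ G.cut A ≠ {e})
    (hpair : ∀ e ∈ S, ∀ f ∈ S, e ≠ f → ∃ A, S ∩ G.cut A = {e, f}) : G.ConnOn S := by
  classical
  intro u hu v hv
  obtain ⟨e, he, i, rfl⟩ := mem_suppV.mp hu
  obtain ⟨f, hf, j, rfl⟩ := mem_suppV.mp hv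
  by_contra hunreach
  let C : Finset V := {x | Relation.ReflTransGen (G.AdjOn S) (G.ends e i) x}
  have hmemC (g : E) (hg : g ∈ S) (k l : Bool) (hk : G.ends g k ∈ C) : G.ends g l ∈ C := by
    rcases Bool.eq_or_eq_not l k with rfl | rfl
    · exact hk
    · simp only [C, mem_filter_univ] at hk ⊢
      exact hk.tail ⟨g, hg, k, rfl, rfl⟩
  have heC (k : Bool) : G.ends e k ∈ C := hmemC e he i k (by simp [C, Relation.ReflTransGen.refl])
  have hfC (k : Bool) : G.ends f k ∉ C := fun hk => hunreach (by simpa [C] using hmemC f hf k j hk)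
  obtain ⟨A, hA⟩ := hpair e he f hf fun h => hfC j (h ▸ heC j)
  -- Restricting a side of the cut `{e, f}` to the component of `e` leaves the cut `{e}`.
  refine hsingle (A ∩ C) e (ext fun g => ?_)
  have hgA := Finset.ext_iff.mp hA g
  simp only [mem_inter, mem_insert, mem_singleton, mem_cut_iff false] at hgA ⊢
  grind

theorem exists_notMem_inter_cut_eq_pair [Finite V]
    (hpair : ∀ e ∈ S, ∀ f ∈ S, e ≠ f → ∃ A, S ∩ G.cut A = {e, f}) (v : V)
    {e f : E} (he : e ∈ S) (hf : f ∈ S) (hef : e ≠ f) : ∃ A, v ∉ A ∧ S ∩ G.cut A = {e, f} := by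
  cases nonempty_fintype V
  obtain ⟨A, hA⟩ := hpair e he f hf hef
  by_cases hv : v ∈ A
  · exact ⟨Aᶜ, by simpa using hv, by rwa [cut_compl]⟩
  · exact ⟨A, hv, hA⟩

theorem eq_or_eq_or_eq_of_ends_eq [Finite V] (hsingle : ∀ A e, S ∩ G.cut A ≠ {e})
    (hpair : ∀ e ∈ S, ∀ f ∈ S, e ≠ f → ∃ A, S ∩ G.cut A = {e, f})
    {e f g : E} {i j k : Bool} (he : e ∈ S) (hf : f ∈ S) (hg : g ∈ S)
    (hef : G.ends e i = G.ends f j) (heg : G.ends e i = G.ends g k) :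
    e = f ∨ e = g ∨ f = g := by
  by_contra! hne
  obtain ⟨A, hvA, hA⟩ := exists_notMem_inter_cut_eq_pair hpair (G.ends e i) he hf hne.1
  obtain ⟨B, hvB, hB⟩ := exists_notMem_inter_cut_eq_pair hpair (G.ends e i) he hg hne.2.1
  -- The sides of the cuts `{e, f}` and `{e, g}` away from the common end meet in a side of `{e}`.
  refine hsingle (A ∩ B) e (ext fun d => ?_)
  have hdA := Finset.ext_iff.mp hA d
  have hdB := Finset.ext_iff.mp hB d
  simp only [mem_inter, mem_insert, mem_singleton, mem_cut_iff false] at hdA hdB ⊢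
  cases i <;> cases j <;> cases k <;> grind

theorem two_le_valencyOn_of_inter_cut [Fintype V] (hsingle : ∀ A e, S ∩ G.cut A ≠ {e}) {v : V}
    (hv : v ∈ G.suppV S) : 2 ≤ G.valencyOn S v := by
  obtain ⟨e, he, i, hei⟩ := mem_suppV.mp hv
  by_contra! hlt
  have hunique (f : E) (hf : f ∈ S) (j : Bool) (hfj : G.ends f j = v) : (f, j) = (e, i) :=
    card_le_one.mp (Nat.le_of_lt_succ hlt) _ (by simp [hf, hfj]) _ (by simp [he, hei])
  refine hsingle {v} e (ext fun f => ?_)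
  simp only [mem_inter, mem_cut_iff i, mem_singleton]
  grind

theorem valencyOn_le_two_of_inter_cut [Finite V] (hsingle : ∀ A e, S ∩ G.cut A ≠ {e})
    (hpair : ∀ e ∈ S, ∀ f ∈ S, e ≠ f → ∃ A, S ∩ G.cut A = {e, f}) (v : V) :
    G.valencyOn S v ≤ 2 := by
  by_cases hloop : ∃ e ∈ S, G.ends e false = G.ends e true
  · obtain ⟨e, he, hloop⟩ := hloop
    have hS : ∀ f ∈ S, f = e := fun f hf => eq_of_mem_of_loop hpair he hloop hf
    calc G.valencyOn S v ≤ #({e} ×ˢ (univ : Finset Bool)) := card_le_card fun p hp => by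
          simpa only [mem_product, mem_singleton, mem_univ, and_true] using
            hS p.1 (mem_filter.mp hp).2.1
      _ = 2 := by simp
  · by_contra! hgt
    obtain ⟨p, q, r, hp, hq, hr, hpq, hpr, hqr⟩ := two_lt_card_iff.mp hgt
    simp only [mem_filter_univ] at hp hq hr
    have hinj (p q : E × Bool) (hp : p.1 ∈ S ∧ G.ends p.1 p.2 = v)
        (hq : q.1 ∈ S ∧ G.ends q.1 q.2 = v) (hpq : p ≠ q) : p.1 ≠ q.1 := by
      intro h
      rcases p with ⟨e, _ | _⟩ <;> rcases q with ⟨f, _ | _⟩ <;> grind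
    rcases eq_or_eq_or_eq_of_ends_eq hsingle hpair hp.1 hq.1 hr.1 (hp.2.trans hq.2.symm)
      (hp.2.trans hr.2.symm) with h | h | h
    · exact hinj p q hp hq hpq h
    · exact hinj p r hp hr hpr h
    · exact hinj q r hq hr hqr h

theorem isCircuit_of_inter_cut [Fintype V] (hS : S.Nonempty)
    (hsingle : ∀ A e, S ∩ G.cut A ≠ {e})
    (hpair : ∀ e ∈ S, ∀ f ∈ S, e ≠ f → ∃ A, S ∩ G.cut A = {e, f}) : G.IsCircuit S :=
  ⟨hS, connOn_of_inter_cut hsingle hpair, fun v hv =>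
    (valencyOn_le_two_of_inter_cut hsingle hpair v).antisymm
      (two_le_valencyOn_of_inter_cut hsingle hv)⟩

end Circuit

/-! ### Harary's balance theorem -/

section Harary

variable [Fintype V] [Fintype E] [DecidableEq V] [DecidableEq E]
  {G : SignedGraph V E} {S : Finset E}

theorem isUnbalancedCircuit_of_minimal (hmin : Minimal (fun T => ¬ G.Switchable T) S) :
    G.IsUnbalancedCircuit S := by
  have hne : S.Nonempty := by
    by_contra h
    exact hmin.prop ⟨∅, by simp [frustrated, not_nonempty_iff_eq_empty.mp h]⟩
  have hcircuit : G.IsCircuit S :=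
    isCircuit_of_inter_cut hne (inter_cut_ne_singleton_of_minimal hmin)
      fun _ he _ hf hef => exists_inter_cut_eq_pair_of_minimal hmin he hf hef
  obtain ⟨e, he⟩ := hne
  obtain ⟨A, hA⟩ := exists_frustrated_eq_singleton_of_minimal hmin he
  refine ⟨hcircuit, ?_⟩
  rw [signOf_eq_neg_one_pow_card_frustrated hcircuit.even_valencyOn A, hA, card_singleton, pow_one]

theorem switchable_iff_forall_isCircuit :
    G.Switchable S ↔ ∀ C ⊆ S, G.IsCircuit C → G.signOf C = 1 := by
  constructor
  · rintro ⟨A, hA⟩ C hCS hC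
    have hCA : G.frustrated A C = ∅ :=
      subset_empty.mp (hA ▸ filter_subset_filter _ hCS)
    rw [signOf_eq_neg_one_pow_card_frustrated hC.even_valencyOn A, hCA, card_empty, pow_zero]
  · intro hpos
    by_contra hS
    obtain ⟨C, hCS, hmin⟩ :=
      exists_minimal_le_of_wellFoundedLT (fun T => ¬ G.Switchable T) S hS
    obtain ⟨hC, hneg⟩ := isUnbalancedCircuit_of_minimal hmin
    exact absurd ((hpos C hCS hC).symm.trans hneg) (by decide)

theorem balanced_iff_switchable : G.Balanced ↔ G.Switchable univ := by
  simp [Balanced, switchable_iff_forall_isCircuit]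

theorem tightlyUnbalanced_iff_switchable :
    G.TightlyUnbalanced ↔ ¬ G.Switchable univ ∧ ∃ f, G.Switchable (univ.erase f) := by
  rw [TightlyUnbalanced, balanced_iff_switchable]
  refine and_congr_right' (exists_congr fun f => ?_)
  rw [switchable_iff_forall_isCircuit]
  refine forall_congr' fun C => ?_
  rw [subset_erase, and_iff_right (subset_univ C), imp.swap]

end Harary

/-! ### Flows and potentials -/

section Flow

variable {G : SignedGraph V E} {R : Type}

/-- The amount by which the potential `y` fails to satisfy `y v = σ(e) y u` along the edge `e = uv`,
where `v = G.ends e true`. Up to a sign depending on the orientation, this is the coboundary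
operator dual to Kirchhoff's law. -/
def tension [CommRing R] (G : SignedGraph V E) (y : V → R) (e : E) : R :=
  y (G.ends e true) - (G.sign e : ℤ) * y (G.ends e false)

/-- The entry `±1` of the incidence matrix at the half-edge `(e, i)`: `1` if it is directed towards
its end-vertex and `-1` otherwise. -/
def Orientation.incidence (O : G.Orientation) (e : E) (i : Bool) : ℤˣ :=
  if O.dir e i then 1 else -1

theorem Orientation.incidence_false (O : G.Orientation) (e : E) :
    O.incidence e false = -(G.sign e * O.incidence e true) := by
  have hcompat := O.compat e
  rcases Int.units_eq_one_or (G.sign e) with h | h <;>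
    cases h₀ : O.dir e false <;> cases h₁ : O.dir e true <;>
    simp_all [Orientation.incidence]

theorem Orientation.incidence_cast_ne_zero [Ring R] [Nontrivial R] (O : G.Orientation) (e : E)
    (i : Bool) : ((O.incidence e i : ℤ) : R) ≠ 0 :=
  ((O.incidence e i).isUnit.map (Int.castRingHom R)).ne_zero

theorem nonempty_orientation (G : SignedGraph V E) : Nonempty G.Orientation :=
  ⟨⟨fun e i => i || decide (G.sign e ≠ 1), fun e => by simp⟩⟩

variable [Fintype E] [DecidableEq V]

/-- The net inflow at the vertex `v`, as a linear functional of the edge values. -/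
def Orientation.netInflow (R : Type) [CommRing R] (O : G.Orientation) (v : V) :
    Module.Dual R (E → R) :=
  ∑ p : E × Bool with G.ends p.1 p.2 = v, ((O.incidence p.1 p.2 : ℤ) : R) • LinearMap.proj p.1

variable [CommRing R] {O : G.Orientation} {φ : E → R}

theorem isFlow_iff_netInflow_eq_zero : G.IsFlow O φ ↔ ∀ v, O.netInflow R v φ = 0 := by
  refine forall_congr' fun v => ?_
  rw [Orientation.netInflow, LinearMap.sum_apply]
  refine Eq.congr_left (sum_congr rfl fun p _ => ?_)
  cases h : O.dir p.1 p.2 <;> simp [Orientation.incidence, h]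

theorem sum_mul_netInflow [Fintype V] (O : G.Orientation) (y : V → R) (φ : E → R) :
    ∑ v, y v * O.netInflow R v φ =
      ∑ e, ((O.incidence e true : ℤ) : R) * G.tension y e * φ e := by
  have hvertex (v : V) : y v * O.netInflow R v φ = ∑ p : E × Bool with G.ends p.1 p.2 = v,
      y (G.ends p.1 p.2) * ((O.incidence p.1 p.2 : ℤ) * φ p.1) := by
    rw [Orientation.netInflow, LinearMap.sum_apply, mul_sum]
    exact sum_congr rfl fun p hp => by simp [(mem_filter.mp hp).2]
  rw [sum_congr rfl fun v _ => hvertex v, sum_fiberwise, Fintype.sum_prod_type]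
  refine sum_congr rfl fun e _ => ?_
  rw [Fintype.sum_bool, O.incidence_false, tension]
  push_cast
  ring

theorem IsFlow.tension_eq_zero [Finite V] [IsDomain R] (hφ : G.IsFlow O φ) {f : E}
    (hf : φ f ≠ 0) {y : V → R} (hy : ∀ e ≠ f, G.tension y e = 0) : G.tension y f = 0 := by
  cases nonempty_fintype V
  have hsum := sum_mul_netInflow O y φ
  rw [sum_eq_zero fun v _ => by rw [isFlow_iff_netInflow_eq_zero.mp hφ v, mul_zero],
    Fintype.sum_eq_single f fun e he => by rw [hy e he, mul_zero, zero_mul]] at hsum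
  simpa [hf, O.incidence_cast_ne_zero] using hsum.symm

theorem exists_isFlow_apply_ne_zero {K : Type} [Field K] [Finite V] (O : G.Orientation) {f : E}
    (hf : ∀ y : V → K, (∀ e ≠ f, G.tension y e = 0) → G.tension y f = 0) :
    ∃ φ : E → K, G.IsFlow O φ ∧ φ f ≠ 0 := by
  classical
  cases nonempty_fintype V
  by_contra! hzero
  have hspan : (LinearMap.proj f : Module.Dual K (E → K)) ∈
      Submodule.span K (Set.range (O.netInflow K)) :=
    mem_span_of_iInf_ker_le_ker fun φ hφ =>
      hzero φ (isFlow_iff_netInflow_eq_zero.mpr (by simpa using hφ))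
  obtain ⟨y, hy⟩ := (Submodule.mem_span_range_iff_exists_fun K).mp hspan
  have htension (e : E) :
      ((O.incidence e true : ℤ) : K) * G.tension y e = (Pi.single e 1 : E → K) f := by
    have h := sum_mul_netInflow O y (Pi.single e 1)
    rw [Fintype.sum_eq_single e fun d hd => by rw [Pi.single_eq_of_ne hd, mul_zero],
      Pi.single_eq_same, mul_one] at h
    rw [← h]
    simpa using LinearMap.congr_fun hy (Pi.single e 1)
  have hy_off : ∀ e ≠ f, G.tension y e = 0 := fun e he => by
    have h := htension e
    rw [Pi.single_eq_of_ne he.symm] at h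
    exact (mul_eq_zero.mp h).resolve_left (O.incidence_cast_ne_zero e true)
  simpa [hf y hy_off] using htension f

theorem hasNZFlow_of_tension {K : Type} [Field K] [Infinite K] [Finite V]
    (h : ∀ (f : E) (y : V → K), (∀ e ≠ f, G.tension y e = 0) → G.tension y f = 0) :
    G.HasNZFlow K := by
  obtain ⟨O⟩ := G.nonempty_orientation
  have hflow (f : E) : ∃ φ ∈ ⨅ v, LinearMap.ker (O.netInflow K v),
      (LinearMap.proj f : Module.Dual K (E → K)) φ ≠ 0 := by
    obtain ⟨φ, hφ, hφf⟩ := exists_isFlow_apply_ne_zero O (h f)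
    exact ⟨φ, by simpa using isFlow_iff_netInflow_eq_zero.mp hφ, hφf⟩
  obtain ⟨φ, hφ, hne⟩ := Module.Dual.exists_forall_mem_ne_zero_of_forall_exists _ _ hflow
  exact ⟨O, φ, isFlow_iff_netInflow_eq_zero.mpr (by simpa using hφ), hne⟩

theorem HasNZFlow.of_isFractionRing {K : Type} [Field K] [Algebra R K] [IsFractionRing R K]
    (h : G.HasNZFlow K) : G.HasNZFlow R := by
  obtain ⟨O, φ, hφ, hne⟩ := h
  obtain ⟨b, hb⟩ := IsLocalization.exist_integer_multiples_of_finite (nonZeroDivisors R) φ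
  choose ψ hψ using hb
  have hinj : Function.Injective (algebraMap R K) := IsFractionRing.injective R K
  have hb : algebraMap R K b ≠ 0 := (IsLocalization.map_units K b).ne_zero
  refine ⟨O, ψ, fun v => hinj ?_, fun e he => ?_⟩
  · calc _ = ∑ p : E × Bool with G.ends p.1 p.2 = v,
          algebraMap R K b * (if O.dir p.1 p.2 then φ p.1 else -φ p.1) := by
            rw [map_sum]
            refine sum_congr rfl fun p _ => ?_
            split <;> simp [hψ, Algebra.smul_def]
      _ = algebraMap R K 0 := by rw [← mul_sum, hφ v, mul_zero, map_zero]
  · have h := hψ e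
    rw [he, map_zero, Algebra.smul_def] at h
    exact mul_ne_zero hb (hne e) h.symm

end Flow

/-! ### Potentials and frustrated edges -/

section Potential

variable {G : SignedGraph V E} {S : Finset E} {f : E} {R : Type} [CommRing R] [LinearOrder R]
  {y : V → R}

theorem abs_eq_abs_of_reflTransGen (hy : ∀ e ∈ S, G.tension y e = 0) {u v : V}
    (huv : Relation.ReflTransGen (G.AdjOn S) u v) : |y u| = |y v| := by
  induction huv with
  | refl => rfl
  | tail _ hadj ih =>
    obtain ⟨e, he, i, rfl, rfl⟩ := hadj
    have habs : |y (G.ends e true)| = |y (G.ends e false)| := by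
      rw [sub_eq_zero.mp (hy e he)]
      rcases Int.units_eq_one_or (G.sign e) with h | h <;> simp [h]
    cases i
    · exact ih.trans habs.symm
    · exact ih.trans habs

variable [Fintype E] [DecidableEq V] [DecidableEq E] [IsStrictOrderedRing R]

theorem mem_frustrated_filter_neg_iff [Fintype V] {e : E} (hne : y (G.ends e true) ≠ 0)
    (habs : |y (G.ends e true)| = |y (G.ends e false)|) :
    e ∈ G.frustrated {v | y v < 0} S ↔ e ∈ S ∧ G.tension y e ≠ 0 := by
  rw [frustrated, mem_filter, and_congr_right_iff]
  intro _
  rw [mem_cut_iff true, tension, mem_filter_univ, mem_filter_univ, Bool.not_true]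
  have hone : (1 : ℤˣ) ≠ -1 := by decide
  rcases Int.units_eq_one_or (G.sign e) with hsign | hsign <;>
    rcases abs_eq_abs.mp habs with heq | heq <;>
    simp only [hsign, Units.val_one, Units.val_neg, Int.cast_one, Int.cast_neg] <;> grind

theorem FlowAdmissible.switchable_univ [Finite V] (hG : G.FlowAdmissible)
    (hf : G.Switchable (univ.erase f)) : G.Switchable univ := by
  cases nonempty_fintype V
  obtain ⟨O, φ, hφ, hne⟩ := hG
  obtain ⟨A, hA⟩ := hf
  let y : V → ℤ := fun v => if v ∈ A then -1 else 1
  have hyA : ({v | y v < 0} : Finset V) = A := by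
    ext v
    by_cases hv : v ∈ A <;> simp [y, hv]
  have hy (v : V) : |y v| = 1 := by
    by_cases hv : v ∈ A <;> simp [y, hv]
  have hmem (S : Finset E) (e : E) : e ∈ G.frustrated A S ↔ e ∈ S ∧ G.tension y e ≠ 0 :=
    hyA ▸ mem_frustrated_filter_neg_iff (abs_pos.mp (by simp [hy])) (by simp only [hy])
  have hoff : ∀ e ≠ f, G.tension y e = 0 := by
    simpa [hA] using hmem (univ.erase f)
  refine ⟨A, eq_empty_of_forall_notMem fun e he => ((hmem _ e).mp he).2 ?_⟩
  obtain rfl | hef := eq_or_ne e f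
  · exact hφ.tension_eq_zero (hne e) hoff
  · exact hoff e hef

theorem TwoEdgeConnected.tension_eq_zero [Finite V] (h2ec : G.TwoEdgeConnected)
    (hf : G.Switchable (univ.erase f) → G.Switchable univ)
    (hy : ∀ e ≠ f, G.tension y e = 0) : G.tension y f = 0 := by
  cases nonempty_fintype V
  by_contra hyf
  have habs (u v : V) : |y u| = |y v| :=
    abs_eq_abs_of_reflTransGen (fun e he => hy e (ne_of_mem_erase he)) (h2ec.2 f u v)
  have hne (v : V) : y v ≠ 0 := fun hv => hyf <| by
    have hzero (u : V) : y u = 0 := abs_eq_zero.mp (by rw [habs u v, hv, abs_zero])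
    simp [tension, hzero]
  let A : Finset V := {v | y v < 0}
  have hmem (S : Finset E) (e : E) : e ∈ G.frustrated A S ↔ e ∈ S ∧ G.tension y e ≠ 0 :=
    mem_frustrated_filter_neg_iff (hne _) (habs _ _)
  obtain ⟨B, hB⟩ : G.Switchable univ := hf ⟨A, eq_empty_of_forall_notMem fun e he =>
    ((hmem _ e).mp he).2 (hy e (ne_of_mem_erase ((hmem _ e).mp he).1))⟩
  have hcut : G.cut (A ∆ B) = G.frustrated A univ := by
    rw [← univ_inter (G.cut _), ← frustrated_symmDiff_frustrated, hB, ← bot_eq_empty,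
      symmDiff_bot]
  have hsub : G.cut (A ∆ B) ⊆ {f} := fun e he => by
    by_contra hef
    exact ((hmem _ e).mp (hcut ▸ he)).2 (hy e (by simpa using hef))
  have hfA : f ∈ G.frustrated A univ := (hmem _ f).mpr ⟨mem_univ f, hyf⟩
  rw [← hcut, h2ec.cut_eq_empty_of_subset_singleton hsub] at hfA
  exact notMem_empty f hfA

end Potential

end SignedGraph

open SignedGraph in
theorem stmt8_general {V E : Type} [Fintype V] [Fintype E] [DecidableEq V] [DecidableEq E]
    (G : SignedGraph V E) (h2ec : G.TwoEdgeConnected) :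
    G.FlowAdmissible ↔ ¬ G.TightlyUnbalanced := by
  rw [tightlyUnbalanced_iff_switchable]
  constructor
  · rintro hflow ⟨hunbal, f, hf⟩
    exact hunbal (hflow.switchable_univ hf)
  · intro htight
    have hrat : G.HasNZFlow ℚ := hasNZFlow_of_tension fun f _ hy =>
      h2ec.tension_eq_zero (fun hf => by_contra fun hunbal => htight ⟨hunbal, f, hf⟩) hy
    exact hrat.of_isFractionRing

open SignedGraph Finset in
/-- A 2-edge-connected unbalanced signed graph is flow-admissible
if and only if it is not tightly unbalanced. -/
theorem stmt8 {V E : Type} [Fintype V] [Fintype E] [DecidableEq V]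
    [DecidableEq E] (G : SignedGraph V E) (h2ec : G.TwoEdgeConnected)
    (hunbal : ¬ G.Balanced) :
    G.FlowAdmissible ↔ ¬ G.TightlyUnbalanced :=
  stmt8_general G h2ec
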